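/- Let G be a strongly connected countable directed graph, F : E → ℝ a function, β ∈ ℝ and v a vertex. The following are equivalent: (1) Σ_{k≥1} l^k_{vv}(β) = 1; (2) A(β) is recurrent and limsup_n (A(β)ⁿ_{vv})^{1/n} = 1. -/

import Mathlib

open scoped ENNReal NNReal Classical
open Filter MeasureTheory

/-- A countable directed graph: countable sets of vertices and edges with
source and range maps. -/
structure DirGraph where
  V : Type
  E : Type
  countV : Countable V
  countE : Countable E
  s : E → V
  r : E → V

namespace DirGraph

attribute [instance] countV countE

variable (G : DirGraph)

/-- `μ` is a finite path (a vertex counts as the empty path). -/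
def IsPath (μ : List G.E) : Prop := μ.Chain' (fun e f => G.r e = G.s f)

/-- `μ` is a finite path from `u` to `w`. -/
def IsPathFrom (μ : List G.E) (u w : G.V) : Prop :=
  G.IsPath μ ∧ (∀ e ∈ μ.head?, G.s e = u) ∧ (∀ e ∈ μ.getLast?, G.r e = w) ∧ (μ = [] → u = w)

/-- A function `F : E → ℝ` extended to finite paths. -/
def Fsum (F : G.E → ℝ) (μ : List G.E) : ℝ := (μ.map F).sum

/-- The matrix `A(β)` over the vertices, with entries in `[0,∞]`:
`A(β)_{uw} = Σ_{e : u → w} e^{-β F(e)}`. -/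
noncomputable def Amat (F : G.E → ℝ) (β : ℝ) (u w : G.V) : ℝ≥0∞ :=
  ∑' e : {e : G.E // G.s e = u ∧ G.r e = w}, ENNReal.ofReal (Real.exp (-β * F e.1))

/-- The powers of the matrix `A(β)`, defined recursively; `A(β)⁰` is the identity matrix. -/
noncomputable def Apow (F : G.E → ℝ) (β : ℝ) : ℕ → G.V → G.V → ℝ≥0∞
  | 0, u, w => if u = w then 1 else 0
  | n + 1, u, w => ∑' x : G.V, G.Amat F β u x * Apow F β n x w

/-- A sink is a vertex emitting no edges. -/
def IsSink (v : G.V) : Prop := ∀ e : G.E, G.s e ≠ v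

/-- An infinite emitter is a vertex emitting infinitely many edges. -/
def InfEmitter (v : G.V) : Prop := {e : G.E | G.s e = v}.Infinite

/-- A set of vertices is hereditary when it is closed under following edges. -/
def Hereditary (H : Set G.V) : Prop := ∀ e : G.E, G.s e ∈ H → G.r e ∈ H

/-- A set of vertices `H` is saturated when every vertex of `V ∖ V∞` all of whose
successors lie in `H` belongs to `H`. -/
def Saturated (H : Set G.V) : Prop :=
  ∀ v : G.V, ¬ G.IsSink v → ¬ G.InfEmitter v → (∀ e : G.E, G.s e = v → G.r e ∈ H) → v ∈ H

/-- `G` is cofinal when the only nonempty hereditary and saturated set of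
vertices is the whole vertex set. -/
def Cofinal : Prop :=
  ∀ H : Set G.V, H.Nonempty → G.Hereditary H → G.Saturated H → H = Set.univ

/-- The set of non-wandering vertices: those lying on a loop of length ≥ 1. -/
def NW : Set G.V := {v | ∃ μ : List G.E, μ ≠ [] ∧ G.IsPathFrom μ v v}

/-- `G` is strongly connected when there is a finite path between any two vertices. -/
def StronglyConnected : Prop := ∀ u w : G.V, ∃ μ : List G.E, G.IsPathFrom μ u w

/-- `G` is row-finite when every vertex emits only finitely many edges. -/
def RowFinite : Prop := ∀ v : G.V, {e : G.E | G.s e = v}.Finite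

/-- `ψ` is an `A(β)`-harmonic vector. -/
def Harmonic (F : G.E → ℝ) (β : ℝ) (ψ : G.V → ℝ≥0) : Prop :=
  ∀ v : G.V, ∑' w : G.V, G.Amat F β v w * ψ w = (ψ v : ℝ≥0∞)

/-- `A(β)` is transient when `Σ_n A(β)ⁿ_{vv} < ∞` for every vertex. -/
def Transient (F : G.E → ℝ) (β : ℝ) : Prop :=
  ∀ v : G.V, ∑' n : ℕ, G.Apow F β n v v ≠ ⊤

/-- `A(β)` is recurrent when `Σ_n A(β)ⁿ_{vv} = ∞` for some vertex. -/
def Recurrent (F : G.E → ℝ) (β : ℝ) : Prop :=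
  ∃ v : G.V, ∑' n : ℕ, G.Apow F β n v v = ⊤

/-- An exit path: a sequence of vertices joined by edges which leaves every
finite set of vertices. -/
def IsExitPath (t : ℕ → G.V) : Prop :=
  (∀ i : ℕ, ∃ e : G.E, G.s e = t i ∧ G.r e = t (i + 1)) ∧
  ∀ M : Set G.V, M.Finite → ∃ N : ℕ, ∀ i : ℕ, N ≤ i → t i ∉ M

/-- Tail equivalence of vertex sequences. -/
def TailEquiv (t t' : ℕ → G.V) : Prop :=
  ∃ k : ℤ, ∃ N : ℕ, ∀ i : ℕ, N ≤ i → 0 ≤ (i : ℤ) + k ∧ t ((i : ℤ) + k).toNat = t' i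

/-- A simple loop based at `v`: a loop which returns to `v` only at the very end. -/
def IsSimpleLoop (v : G.V) (μ : List G.E) : Prop :=
  μ ≠ [] ∧ G.IsPathFrom μ v v ∧
  ∀ (i : ℕ) (h : i + 1 < μ.length), G.r (μ.get ⟨i, Nat.lt_of_succ_lt h⟩) ≠ v

/-- `lⁿ_{vv}(β)`: the weighted number of simple loops of length `n` based at `v`. -/
noncomputable def loopSum (F : G.E → ℝ) (β : ℝ) (v : G.V) (n : ℕ) : ℝ≥0∞ :=
  ∑' μ : {μ : List G.E // μ.length = n ∧ G.IsSimpleLoop v μ},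
    ENNReal.ofReal (Real.exp (-β * G.Fsum F μ.1))

/-- The space `P(G)` of infinite paths in `G`. -/
def PathSpace : Type := {p : ℕ → G.E // ∀ i : ℕ, G.r (p i) = G.s (p (i + 1))}

/-- The Borel σ-algebra of `P(G)` as a subspace of the product `E^ℕ` with `E`
discrete (for a countable discrete space, the Borel σ-algebra is the power set). -/
instance : MeasurableSpace G.PathSpace :=
  letI : MeasurableSpace G.E := ⊤
  inferInstanceAs (MeasurableSpace {p : ℕ → G.E // ∀ i : ℕ, G.r (p i) = G.s (p (i + 1))})

/-- The cylinder set `Z'(v)` of infinite paths starting at the vertex `v`. -/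
def cylV (v : G.V) : Set G.PathSpace := {p | G.s (p.1 0) = v}

/-- The cylinder set `Z'(μ)` of infinite paths beginning with the finite path `μ`. -/
def cylP (μ : List G.E) : Set G.PathSpace :=
  {p | ∀ (i : ℕ) (h : i < μ.length), p.1 i = μ.get ⟨i, h⟩}

/-- The set `P(G)_wan` of wandering infinite paths: those visiting each vertex
only finitely many times. -/
def wanSet : Set G.PathSpace := {p | ∀ v : G.V, {i : ℕ | G.s (p.1 i) = v}.Finite}

end DirGraph


namespace DirGraph

/-- Weight of an edge. -/
noncomputable def wt (G : DirGraph) (F : G.E → ℝ) (β : ℝ) (e : G.E) : ℝ≥0∞ :=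
  ENNReal.ofReal (Real.exp (-β * F e))

/-- First-passage weights. -/
noncomputable def fp (G : DirGraph) (F : G.E → ℝ) (β : ℝ) (v : G.V) : ℕ → G.V → ℝ≥0∞
  | 0, u => G.Amat F β u v
  | n + 1, u => ∑' x : G.V, G.Amat F β u x * (if x = v then 0 else fp G F β v n x)

lemma Amat_tsum (G : DirGraph) (F : G.E → ℝ) (β : ℝ) (u : G.V) (g : G.V → ℝ≥0∞) :
    ∑' x, G.Amat F β u x * g x = ∑' e : G.E, if G.s e = u then G.wt F β e * g (G.r e) else 0 := by
  have h : ∀ x, G.Amat F β u x * g x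
      = ∑' e : G.E, if G.r e = x then (if G.s e = u then G.wt F β e * g (G.r e) else 0) else 0 := by
    intro x
    unfold Amat
    rw [← ENNReal.tsum_mul_right]
    refine (tsum_subtype {e : G.E | G.s e = u ∧ G.r e = x}
      (fun e => ENNReal.ofReal (Real.exp (-β * F e)) * g x)).trans ?_
    refine tsum_congr fun e => ?_
    simp only [Set.indicator, Set.mem_ofPred_eq, wt]
    by_cases h1 : G.s e = u <;> by_cases h2 : G.r e = x <;> simp [h1, h2]
  simp_rw [h]
  rw [ENNReal.tsum_comm]
  refine tsum_congr fun e => ?_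
  rw [tsum_eq_single (G.r e)]
  · simp
  · intro x hx
    simp [Ne.symm hx]

lemma Amat_eq (G : DirGraph) (F : G.E → ℝ) (β : ℝ) (u v : G.V) :
    G.Amat F β u v = ∑' e : G.E, if G.s e = u ∧ G.r e = v then G.wt F β e else 0 := by
  unfold Amat
  refine (tsum_subtype {e : G.E | G.s e = u ∧ G.r e = v}
      (fun e => ENNReal.ofReal (Real.exp (-β * F e)))).trans ?_
  refine tsum_congr fun e => ?_
  simp only [Set.indicator, Set.mem_ofPred_eq, wt]

/-- Recursive form of the first-return paths. -/
def FR (G : DirGraph) (v : G.V) : List G.E → G.V → Prop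
  | [], _ => False
  | e :: μ, u => G.s e = u ∧ ((μ = [] ∧ G.r e = v) ∨ (G.r e ≠ v ∧ FR G v μ (G.r e)))

lemma isPath_iff (G : DirGraph) (μ : List G.E) :
    G.IsPath μ ↔ μ.IsChain (fun e f => G.r e = G.s f) := Iff.rfl

lemma FR_iff (G : DirGraph) (v : G.V) (μ : List G.E) : ∀ u : G.V,
    (μ ≠ [] ∧ G.IsPathFrom μ u v ∧
      ∀ (i : ℕ) (h : i + 1 < μ.length), G.r (μ.get ⟨i, Nat.lt_of_succ_lt h⟩) ≠ v) ↔ G.FR v μ u := by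
  induction μ with
  | nil => intro u; simp [FR]
  | cons e μ ih =>
    intro u
    rw [FR, ← ih]
    cases μ with
    | nil => simp [IsPathFrom, isPath_iff]
    | cons f μ =>
      simp only [IsPathFrom, isPath_iff]
      constructor
      · rintro ⟨-, ⟨h1, h2, h3, h4⟩, h5⟩
        simp only [List.isChain_cons_cons] at h1
        refine ⟨by simpa using h2, Or.inr ⟨by simpa using h5 0 (by simp), by simp, 
          ⟨h1.2, by simpa using h1.1.symm, by simpa using h3, by simp⟩, ?_⟩⟩
        intro i hi
        simpa using h5 (i+1) (by simpa using hi)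
      · rintro ⟨h1, h2 | ⟨h2, -, ⟨h3, h4, h5, h6⟩, h7⟩⟩
        · simp at h2
        · refine ⟨by simp, ⟨?_, by simpa using h1, by simpa using h5, by simp⟩, ?_⟩
          · simp only [List.isChain_cons_cons]
            exact ⟨by simpa using (h4 f (by simp)).symm, h3⟩
          · intro i hi
            cases i with
            | zero => simpa using h2
            | succ i => simpa using h7 i (by simpa using hi)

/-- Weight of a path. -/
noncomputable def pw (G : DirGraph) (F : G.E → ℝ) (β : ℝ) (μ : List G.E) : ℝ≥0∞ :=
  ENNReal.ofReal (Real.exp (-β * G.Fsum F μ))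

lemma pw_cons (G : DirGraph) (F : G.E → ℝ) (β : ℝ) (e : G.E) (μ : List G.E) :
    G.pw F β (e :: μ) = G.wt F β e * G.pw F β μ := by
  unfold pw wt Fsum
  rw [← ENNReal.ofReal_mul (Real.exp_nonneg _), ← Real.exp_add]
  simp [mul_add]

lemma tsum_FR (G : DirGraph) (F : G.E → ℝ) (β : ℝ) (v : G.V) (n : ℕ) : ∀ u : G.V,
    (∑' μ : List G.E, if μ.length = n + 1 ∧ G.FR v μ u then G.pw F β μ else 0)
      = G.fp F β v n u := by
  have key : ∀ (n : ℕ) (u : G.V),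
      (∑' μ : List G.E, if μ.length = n + 1 ∧ G.FR v μ u then G.pw F β μ else 0)
      = ∑' e : G.E, ∑' μ : List G.E,
        if (e :: μ).length = n + 1 ∧ G.FR v (e :: μ) u then G.pw F β (e :: μ) else 0 := by
    intro n u
    rw [← ENNReal.tsum_prod (f := fun e μ =>
      if (e :: μ).length = n + 1 ∧ G.FR v (e :: μ) u then G.pw F β (e :: μ) else 0)]
    have hinj : Function.Injective (fun p : G.E × List G.E => p.1 :: p.2) := by
      rintro ⟨a, b⟩ ⟨c, d⟩ h
      simpa using h
    rw [← hinj.tsum_eq]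
    intro μ hμ
    cases μ with
    | nil => simp at hμ
    | cons e μ => exact ⟨(e, μ), rfl⟩
  induction n with
  | zero =>
    intro u
    rw [key, fp, Amat_eq]
    refine tsum_congr fun e => ?_
    rw [tsum_eq_single []]
    · by_cases h1 : G.s e = u <;> by_cases h2 : G.r e = v <;> simp [FR, h1, h2, pw, wt, Fsum]
    · intro μ hμ
      simp [hμ]
  | succ n ih =>
    intro u
    rw [key, fp, Amat_tsum]
    refine tsum_congr fun e => ?_
    rw [← ih]
    by_cases h1 : G.s e = u
    · by_cases h2 : G.r e = v
      · simp [FR, h1, h2]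
        intro μ h3 h4
        simp [h4] at h3
      · simp only [h1, h2, if_true, if_false]
        rw [← ENNReal.tsum_mul_left]
        refine tsum_congr fun μ => ?_
        rw [pw_cons]
        simp [FR, h1, h2]
    · simp [FR, h1]

lemma loopSum_eq (G : DirGraph) (F : G.E → ℝ) (β : ℝ) (v : G.V) (n : ℕ) :
    G.loopSum F β v (n + 1) = G.fp F β v n v := by
  rw [← tsum_FR]
  unfold loopSum
  refine (tsum_subtype {μ : List G.E | μ.length = n + 1 ∧ G.IsSimpleLoop v μ}
    (fun μ => ENNReal.ofReal (Real.exp (-β * G.Fsum F μ)))).trans ?_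
  refine tsum_congr fun μ => ?_
  have hiff : G.IsSimpleLoop v μ ↔ G.FR v μ v := G.FR_iff v μ v
  by_cases hc : μ.length = n + 1 ∧ G.FR v μ v
  · rw [if_pos hc, Set.indicator_of_mem (by exact ⟨hc.1, hiff.2 hc.2⟩)]
    rfl
  · rw [if_neg hc, Set.indicator_of_notMem (by exact fun h => hc ⟨h.1, hiff.1 h.2⟩)]

lemma renewal (G : DirGraph) (F : G.E → ℝ) (β : ℝ) (v : G.V) (n : ℕ) : ∀ u : G.V,
    G.Apow F β (n + 1) u v
      = ∑ p ∈ Finset.HasAntidiagonal.antidiagonal n, G.fp F β v p.1 u * G.Apow F β p.2 v v := by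
  induction n with
  | zero =>
    intro u
    simp [Apow, fp]
  | succ n ih =>
    intro u
    rw [Finset.Nat.antidiagonal_succ, Finset.sum_cons, Finset.sum_map]
    rw [Apow]
    have h : ∀ x, G.Amat F β u x * G.Apow F β (n + 1) x v
        = (if x = v then G.Amat F β u v * G.Apow F β (n + 1) v v else 0)
          + ∑ p ∈ Finset.HasAntidiagonal.antidiagonal n, 
            G.Amat F β u x * (if x = v then 0 else G.fp F β v p.1 x) * G.Apow F β p.2 v v := by
      intro x
      by_cases hx : x = v
      · subst hx; simp
      · simp only [hx, if_false, zero_add]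
        rw [ih, Finset.mul_sum]
        simp_rw [mul_assoc]
    rw [tsum_congr h, ENNReal.tsum_add, tsum_ite_eq, Summable.tsum_finsetSum (fun _ _ => ENNReal.summable)]
    congr 1
    refine Finset.sum_congr rfl fun p _ => ?_
    rw [ENNReal.tsum_mul_right]
    rfl

lemma Apow_mul_le (G : DirGraph) (F : G.E → ℝ) (β : ℝ) (m n : ℕ) : ∀ u x w : G.V,
    G.Apow F β m u x * G.Apow F β n x w ≤ G.Apow F β (m + n) u w := by
  induction m with
  | zero =>
    intro u x w
    by_cases h : u = x
    · subst h; simp [Apow]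
    · simp [Apow, h]
  | succ m ih =>
    intro u x w
    rw [show m + 1 + n = (m + n) + 1 by omega, Apow, Apow, ← ENNReal.tsum_mul_right]
    refine ENNReal.tsum_le_tsum fun y => ?_
    rw [mul_assoc]
    gcongr
    exact ih _ _ _

lemma Apow_ne_zero (G : DirGraph) (F : G.E → ℝ) (β : ℝ) (w : G.V) (μ : List G.E) : ∀ u : G.V,
    G.IsPathFrom μ u w → G.Apow F β μ.length u w ≠ 0 := by
  induction μ with
  | nil =>
    rintro u ⟨-, -, -, h⟩
    simp [Apow, h rfl]
  | cons e μ ih =>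
    rintro u ⟨h1, h2, h3, -⟩
    have hP : G.IsPathFrom μ (G.r e) w := by
      cases μ with
      | nil => simpa [IsPathFrom, isPath_iff] using h3
      | cons f μ =>
        simp only [isPath_iff, List.isChain_cons_cons] at h1
        exact ⟨h1.2, by simpa using h1.1.symm, by simpa using h3, by simp⟩
    have h := ih _ hP
    have hu : G.s e = u := by simpa using h2
    rw [List.length_cons, Apow, Amat_tsum]
    intro h0
    rw [ENNReal.tsum_eq_zero] at h0
    have := h0 e
    simp [hu, h, wt] at this
    exact absurd this (not_le.2 (Real.exp_pos _))

lemma tsum_top (G : DirGraph) (hSC : G.StronglyConnected) (F : G.E → ℝ) (β : ℝ) (v : G.V)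
    (h : G.Recurrent F β) : ∑' n : ℕ, G.Apow F β n v v = ⊤ := by
  obtain ⟨w, hw⟩ := h
  obtain ⟨μ, hμ⟩ := hSC v w
  obtain ⟨ν, hν⟩ := hSC w v
  have h1 := G.Apow_ne_zero F β _ _ _ hμ
  have h2 := G.Apow_ne_zero F β _ _ _ hν
  set p := μ.length
  set q := ν.length
  have : ∑' n : ℕ, G.Apow F β p v w * G.Apow F β n w w * G.Apow F β q w v = ⊤ := by
    rw [ENNReal.tsum_mul_right, ENNReal.tsum_mul_left, hw, ENNReal.mul_top h1, ENNReal.top_mul h2]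
  rw [eq_top_iff, ← this]
  calc _ ≤ ∑' n : ℕ, G.Apow F β (p + n + q) v v := by
        refine ENNReal.tsum_le_tsum fun n => ?_
        exact (mul_le_mul_left (G.Apow_mul_le F β p n v w w) _).trans (G.Apow_mul_le F β _ q v w v)
    _ ≤ _ := by
        have hinj : Function.Injective (fun n : ℕ => p + n + q) := by
          intro a b hab
          simp only at hab
          omega
        exact ENNReal.tsum_comp_le_tsum_of_injective hinj (fun n => G.Apow F β n v v)

end DirGraph

lemma cauchy_aux (f g : ℕ → ℝ≥0∞) :
    ∑' n, ∑ p ∈ Finset.HasAntidiagonal.antidiagonal n, f p.1 * g p.2 = (∑' n, f n) * ∑' n, g n := by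
  rw [← ENNReal.tsum_mul_right]
  simp_rw [← ENNReal.tsum_mul_left]
  rw [← ENNReal.tsum_prod (f := fun i j => f i * g j),
    ← (Finset.HasAntidiagonal.sigmaAntidiagonalEquivProd (A := ℕ)).tsum_eq, ENNReal.tsum_sigma']
  refine tsum_congr fun n => ?_
  rw [tsum_fintype, ← Finset.sum_coe_sort]
  rfl

lemma renewal_tsum (l a : ℕ → ℝ≥0∞) (h0 : a 0 = 1)
    (h : ∀ n, a (n + 1) = ∑ p ∈ Finset.HasAntidiagonal.antidiagonal n, l p.1 * a p.2) (x : ℝ≥0∞) :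
    ∑' n, a n * x ^ n = 1 + (∑' n, l n * x ^ (n + 1)) * ∑' n, a n * x ^ n := by
  conv_lhs => rw [tsum_eq_zero_add' ENNReal.summable]
  rw [← cauchy_aux]
  simp only [h0, pow_zero, mul_one]
  congr 1
  refine tsum_congr fun n => ?_
  rw [h, Finset.sum_mul]
  refine Finset.sum_congr rfl fun p hp => ?_
  rw [← Finset.HasAntidiagonal.mem_antidiagonal.1 hp]
  ring

lemma renewal_main (l a : ℕ → ℝ≥0∞) (h0 : a 0 = 1)
    (h : ∀ n, a (n + 1) = ∑ p ∈ Finset.HasAntidiagonal.antidiagonal n, l p.1 * a p.2)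
    (hm : ∀ m n, a m * a n ≤ a (m + n)) :
    ∑' k, l k = 1 ↔ (∑' n, a n = ⊤ ∧ limsup (fun n : ℕ => a n ^ ((n : ℝ)⁻¹)) atTop = 1) := by
  have hren : ∑' n, a n = 1 + (∑' n, l n) * ∑' n, a n := by
    simpa using renewal_tsum l a h0 h 1
  constructor
  · intro hl
    have hT : ∑' n, a n = ⊤ := by
      by_contra hne
      rw [hl, one_mul] at hren
      exact (ENNReal.lt_add_right hne one_ne_zero).ne (hren.trans (add_comm _ _))
    have ha : ∀ n, a n ≤ 1 := by
      intro n
      induction n using Nat.strong_induction_on with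
      | _ n ih =>
        cases n with
        | zero => exact h0.le
        | succ n =>
          rw [h, ← hl]
          calc _ ≤ ∑ p ∈ Finset.HasAntidiagonal.antidiagonal n, l p.1 := by
                refine Finset.sum_le_sum fun p hp => ?_
                have := Finset.HasAntidiagonal.mem_antidiagonal.1 hp
                exact mul_le_of_le_one_right' (ih _ (by omega))
            _ = ∑ k ∈ Finset.range (n + 1), l k := by
                rw [Finset.Nat.sum_antidiagonal_eq_sum_range_succ_mk]
            _ ≤ _ := ENNReal.sum_le_tsum _
    refine ⟨hT, le_antisymm ?_ ?_⟩
    · refine limsup_le_of_le (by isBoundedDefault) (Eventually.of_forall fun n => ?_)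
      exact ENNReal.rpow_le_one (ha n) (by positivity)
    · by_contra hlt
      rw [not_le] at hlt
      obtain ⟨c, hc1, hc2⟩ := exists_between hlt
      have hev := eventually_lt_of_limsup_lt hc1
      obtain ⟨N, hN⟩ := eventually_atTop.1 hev
      have hb : ∀ n, a n ≤ (if n ∈ Finset.range (N + 1) then 1 else 0) + c ^ n := by
        intro n
        by_cases hn : n ∈ Finset.range (N + 1)
        · simp only [hn, if_true]
          exact (ha n).trans le_self_add
        · simp only [hn, if_false, zero_add]
          simp at hn
          have h1 := (hN n (by omega)).le
          have h2 : (0:ℝ) < n := by exact_mod_cast (by omega : 0 < n)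
          have h3 := ENNReal.rpow_le_rpow h1 h2.le
          rwa [← ENNReal.rpow_mul, inv_mul_cancel₀ h2.ne', ENNReal.rpow_one,
            ENNReal.rpow_natCast] at h3
      have h4 := ENNReal.tsum_le_tsum hb
      rw [hT, ENNReal.tsum_add, ENNReal.tsum_geometric, top_le_iff, ENNReal.add_eq_top] at h4
      rcases h4 with h4 | h4
      · rw [tsum_eq_sum (s := Finset.range (N + 1)) (by intro b hb; simp only [hb, if_false])] at h4
        revert h4
        refine (ENNReal.sum_lt_top.2 fun i hi => ?_).ne
        simp only [hi, if_true, ENNReal.one_lt_top]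
      · rw [ENNReal.inv_eq_top, tsub_eq_zero_iff_le] at h4
        exact absurd h4 (not_le.2 hc2)
  · rintro ⟨hT, hlim⟩
    apply le_antisymm
    · have hpow : ∀ m k, a m ^ k ≤ a (k * m) := by
        intro m k
        induction k with
        | zero => simp [h0]
        | succ k ih =>
          rw [pow_succ, add_mul, one_mul]
          exact (mul_le_mul_left ih _).trans (hm _ _)
      have ha : ∀ m, a m ≤ 1 := by
        intro m
        rcases Nat.eq_zero_or_pos m with rfl | hmp
        · exact h0.le
        have hm' : (0:ℝ) < m := by exact_mod_cast hmp
        have h1 : a m ^ ((m:ℝ)⁻¹) ≤ 1 := by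
          rw [← hlim]
          refine le_limsup_of_frequently_le ?_ (by isBoundedDefault)
          rw [frequently_atTop]
          intro N
          refine ⟨(N + 1) * m, by nlinarith, ?_⟩
          have h2 := ENNReal.rpow_le_rpow (hpow m (N + 1))
            (z := (((N + 1) * m : ℕ) : ℝ)⁻¹) (by positivity)
          refine le_trans (le_of_eq ?_) h2
          rw [← ENNReal.rpow_natCast, ← ENNReal.rpow_mul]
          congr 1
          push_cast
          field_simp
        have h3 := ENNReal.rpow_le_rpow h1 hm'.le
        rwa [← ENNReal.rpow_mul, inv_mul_cancel₀ hm'.ne', ENNReal.rpow_one,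
          ENNReal.one_rpow] at h3
      have hx : ∀ x : ℝ≥0∞, x < 1 → ∑' n, l n * x ^ (n + 1) ≤ 1 := by
        intro x hx
        have hr := renewal_tsum l a h0 h x
        have hfin : ∑' n, a n * x ^ n ≠ ⊤ := by
          have : ∑' n, a n * x ^ n ≤ ∑' n, x ^ n :=
            ENNReal.tsum_le_tsum fun n => mul_le_of_le_one_left' (ha n)
          rw [ENNReal.tsum_geometric] at this
          refine (this.trans_lt ?_).ne
          rw [ENNReal.inv_lt_top]
          exact tsub_pos_of_lt hx
        have hne : ∑' n, a n * x ^ n ≠ 0 := by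
          rw [hr]; simp
        by_contra hlt
        rw [not_le] at hlt
        have h5 : (∑' n, l n * x ^ (n + 1)) * ∑' n, a n * x ^ n ≤ 1 * ∑' n, a n * x ^ n := by
          rw [one_mul]
          conv_rhs => rw [hr]
          exact le_add_self
        rw [ENNReal.mul_le_mul_iff_left hne hfin] at h5
        exact absurd h5 (not_le.2 hlt)
      refine ENNReal.tsum_le_of_sum_range_le fun N => ?_
      set S := ∑ i ∈ Finset.range N, l i with hS
      have hxS : ∀ x : ℝ≥0∞, x < 1 → x ^ N * S ≤ 1 := by
        intro x hx1
        refine le_trans ?_ (hx x hx1)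
        refine le_trans ?_ (ENNReal.sum_le_tsum (Finset.range N))
        rw [hS, Finset.mul_sum]
        refine Finset.sum_le_sum fun i hi => ?_
        rw [mul_comm]
        exact mul_le_mul_right (pow_le_pow_right_of_le_one' hx1.le
          (Nat.succ_le_of_lt (by simpa using hi))) _
      have ht : Tendsto (fun x : ℝ≥0∞ => x ^ N * S) (nhdsWithin 1 (Set.Iio 1)) (nhds (1 ^ N * S)) := by
        refine ENNReal.Tendsto.mul_const ?_ (Or.inl (by simp))
        exact ((ENNReal.continuous_pow N).tendsto 1).mono_left nhdsWithin_le_nhds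
      have : (nhdsWithin (1:ℝ≥0∞) (Set.Iio 1)).NeBot := nhdsLT_neBot_of_exists_lt ⟨0, one_pos⟩
      have h6 := le_of_tendsto ht (eventually_nhdsWithin_of_forall fun x hx => hxS x hx)
      simpa using h6
    · by_contra hlt
      rw [not_le] at hlt
      set L := ∑' k, l k with hL
      have hsum : ∀ N, ∑ n ∈ Finset.range N, a n ≤ ∑' j, L ^ j := by
        intro N
        have hg : ∑' j, L ^ j = 1 + L * ∑' j, L ^ j := by
          conv_lhs => rw [tsum_eq_zero_add' ENNReal.summable]
          rw [← ENNReal.tsum_mul_left]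
          simp [pow_succ']
        induction N with
        | zero => simp
        | succ N ih =>
          rw [hg, Finset.sum_range_succ', h0, add_comm]
          gcongr
          refine le_trans ?_ (mul_le_mul_right ih L)
          rw [hL, ← ENNReal.tsum_mul_right]
          have e1 : ∀ n ∈ Finset.range N, a (n+1)
            = ∑' k, if k ≤ n then l k * a (n - k) else 0 := by
            intro n hn
            rw [h, Finset.Nat.sum_antidiagonal_eq_sum_range_succ_mk,
              tsum_eq_sum (s := Finset.range (n + 1))]
            · refine Finset.sum_congr rfl fun k hk => ?_
              rw [if_pos (by simp at hk; omega)]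
            · intro k hk
              rw [if_neg (by simp at hk; omega)]
          rw [Finset.sum_congr rfl e1, ← Summable.tsum_finsetSum (fun _ _ => ENNReal.summable)]
          refine ENNReal.tsum_le_tsum fun k => ?_
          rw [← Finset.sum_filter, ← Finset.mul_sum]
          gcongr
          have hinj : Set.InjOn (fun n => n - k) (Finset.filter (fun n => k ≤ n) (Finset.range N)) := by
            intro x hx y hy hxy
            simp at hx hy hxy
            omega
          rw [← Finset.sum_image (f := a) hinj]
          refine Finset.sum_le_sum_of_subset ?_
          intro y hy
          simp at hy ⊢
          omega
      have h7 := ENNReal.tsum_le_of_sum_range_le hsum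
      rw [hT, ENNReal.tsum_geometric, top_le_iff, ENNReal.inv_eq_top, tsub_eq_zero_iff_le] at h7
      exact absurd h7 (not_le.2 hlt)

/-- `Σ_k l^k_{vv}(β) = 1` iff `A(β)` is recurrent with spectral radius 1. -/
theorem stmt_13 (G : DirGraph) (hSC : G.StronglyConnected) (F : G.E → ℝ) (β : ℝ) (v : G.V) :
    (∑' k : ℕ, G.loopSum F β v (k + 1)) = 1 ↔
      (G.Recurrent F β ∧
        Filter.limsup (fun n : ℕ => (G.Apow F β n v v) ^ ((n : ℝ)⁻¹)) Filter.atTop = 1) := by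
  simp_rw [G.loopSum_eq]
  rw [renewal_main (fun n => G.fp F β v n v) (fun n => G.Apow F β n v v) (by simp [DirGraph.Apow])
    (fun n => G.renewal F β v n v) (fun m n => G.Apow_mul_le F β m n v v v)]
  exact and_congr_left fun _ => ⟨fun h => ⟨v, h⟩, G.tsum_top hSC F β v⟩
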